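/- (Complete oscillator death) Let β_n := arccos(n/(n+1)), which is the minimum point of S I_n on (0, π). Let (θ_1,...,θ_N) be a global solution of the Winfree model of order n, and assume: β_n < α < π, |θ_i(0)| < α for every i, and κ > (max_i |ν_i|)/(a_n sin α (1 + cos α)^n). Let α* ∈ (0, β_n] satisfy sin(α*) (1 + cos α*)^n = sin(α) (1 + cos α)^n. Then there exists t* ≥ 0 such that for all t ≥ t* and every index i, |θ_i(t)| < α*. -/

import Mathlib

open Real Filter

/-- Normalizing constant `a_n = 2^n (n!)^2 / (2n)!`. -/
noncomputable def aW (n : ℕ) : ℝ :=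
  2 ^ n * (Nat.factorial n : ℝ) ^ 2 / (Nat.factorial (2 * n) : ℝ)

/-- Influence function `I_n(θ) = a_n (1 + cos θ)^n`. -/
noncomputable def influence (n : ℕ) (θ : ℝ) : ℝ := aW n * (1 + Real.cos θ) ^ n

/-- Sensitivity function `S(θ) = -sin θ`. -/
noncomputable def sens (θ : ℝ) : ℝ := -Real.sin θ

/-- A global solution of the Winfree model of order `n` with `N` oscillators,
natural frequencies `ν` and coupling strength `κ`:
`θ_i'(t) = ν_i + (κ/N) S(θ_i(t)) Σ_j I_n(θ_j(t))` for all `t ≥ 0`. -/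
def IsWinfreeSol (n N : ℕ) (ν : Fin N → ℝ) (κ : ℝ) (θ : Fin N → ℝ → ℝ) : Prop :=
  ∀ i : Fin N, ∀ t : ℝ, 0 ≤ t →
    HasDerivAt (θ i)
      (ν i + (κ / N) * sens (θ i t) * ∑ j : Fin N, influence n (θ j t)) t

/-!
The restoring strength `R(r) = a_n sin r (1 + cos r)^n` is increasing on `[0, β_n]` and decreasing
on `[β_n, π]`, so it is at least `R(α) = R(α*)` on the whole interval `[α*, α]`. When every phase
lies in `[-r, r]`, each influence `I_n(θ_j)` is at least `I_n(r)`; an oscillator sitting at `±r` is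
therefore pushed inwards at speed at least `κ R(r) - |ν_i|`, which for `r ∈ [α*, α]` is at least
`δ = κ R(α) - max |ν_i| > 0`. A box whose radius shrinks from `α` to `α*` more slowly than `δ` thus
traps the trajectory. Shrinking linearly over `[0, t]` gives `|θ_i(t)| < α*` for each `t` with
`α - α* < δ t`.
-/

open Set

section Barrier

variable {ι : Type*} [Finite ι] {a b : ℝ}

theorem nonpos_on_Icc_of_deriv_neg_of_eq_zero {g : ι → ℝ → ℝ}
    (hg : ∀ i, ContinuousOn (g i) (Icc a b)) (ha : ∀ i, g i a ≤ 0)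
    (hg' : ∀ t ∈ Icc a b, (∀ j, g j t ≤ 0) → ∀ i, g i t = 0 → deriv (g i) t < 0) :
    ∀ t ∈ Icc a b, ∀ i, g i t ≤ 0 := by
  have hclosed : IsClosed ({t | ∀ i, g i t ≤ 0} ∩ Icc a b) := by
    have h := (continuousOn_pi.2 hg).preimage_isClosed_of_isClosed isClosed_Icc
      (isClosed_Iic (a := (0 : ι → ℝ)))
    rwa [inter_comm] at h
  refine hclosed.Icc_subset_of_forall_mem_nhdsWithin ha fun t ⟨ht, htI⟩ ↦ ?_
  refine eventually_all.2 fun i ↦ ?_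
  rcases (ht i).lt_or_eq with hneg | hzero
  · have hcont : ContinuousWithinAt (g i) (Ioi t) t :=
      ((hg i).mono (Icc_subset_Icc_left htI.1) t (left_mem_Icc.2 htI.2.le)).mono_of_mem_nhdsWithin
        (Icc_mem_nhdsGT htI.2)
    filter_upwards [hcont.eventually_lt_const hneg] with s hs using hs.le
  · have hsign := eventually_nhdsWithin_sign_eq_of_deriv_neg
      (hg' t (Ico_subset_Icc_self htI) ht i hzero) hzero
    filter_upwards [nhdsWithin_le_nhds hsign, self_mem_nhdsWithin] with s hs hts
    rw [sign_neg (sub_neg.2 hts), sign_eq_neg_one_iff] at hs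
    exact hs.le

theorem neg_on_Ioc_of_deriv_neg_of_eq_zero {g : ι → ℝ → ℝ}
    (hg : ∀ i, ContinuousOn (g i) (Icc a b)) (ha : ∀ i, g i a ≤ 0)
    (hg' : ∀ t ∈ Icc a b, (∀ j, g j t ≤ 0) → ∀ i, g i t = 0 → deriv (g i) t < 0) :
    ∀ t ∈ Ioc a b, ∀ i, g i t < 0 := by
  intro t ht i
  have hnonpos := nonpos_on_Icc_of_deriv_neg_of_eq_zero hg ha hg'
  have htI := Ioc_subset_Icc_self ht
  refine (hnonpos t htI i).lt_of_ne fun hzero ↦ ?_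
  have hsign := eventually_nhdsWithin_sign_eq_of_deriv_neg (hg' t htI (hnonpos t htI) i hzero) hzero
  obtain ⟨s, hs, hsI⟩ :=
    ((hsign.filter_mono nhdsWithin_le_nhds).and (Ioo_mem_nhdsLT ht.1)).exists
  rw [sign_pos (sub_pos.2 hsI.2), sign_eq_one_iff] at hs
  exact hs.not_ge (hnonpos s ⟨hsI.1.le, hsI.2.le.trans ht.2⟩ i)

theorem abs_lt_barrier_on_Ioc {x x' : ι → ℝ → ℝ} {B B' : ℝ → ℝ}
    (hx : ∀ i, ∀ t ∈ Icc a b, HasDerivAt (x i) (x' i t) t)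
    (hB : ∀ t ∈ Icc a b, HasDerivAt B (B' t) t) (hBpos : ∀ t ∈ Icc a b, 0 < B t)
    (ha : ∀ i, |x i a| ≤ B a)
    (hcontact : ∀ t ∈ Icc a b, (∀ j, |x j t| ≤ B t) → ∀ i, |x i t| = B t →
      SignType.sign (x i t) * x' i t < B' t) :
    ∀ t ∈ Ioc a b, ∀ i, |x i t| < B t := by
  suffices ∀ t ∈ Ioc a b, ∀ i, |x i t| - B t < 0 by simpa only [sub_neg] using this
  refine neg_on_Ioc_of_deriv_neg_of_eq_zero (g := fun i t ↦ |x i t| - B t)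
    (fun i t ht ↦ ((hx i t ht).continuousAt.abs.sub (hB t ht).continuousAt).continuousWithinAt)
    (fun i ↦ sub_nonpos.2 (ha i)) fun t ht hle i hzero ↦ ?_
  have heq : |x i t| = B t := sub_eq_zero.1 hzero
  have hne : x i t ≠ 0 := abs_pos.1 (heq ▸ hBpos t ht)
  have hderiv : HasDerivAt (fun t ↦ |x i t| - B t) (SignType.sign (x i t) * x' i t - B' t) t :=
    ((hasDerivAt_abs hne).comp t (hx i t ht)).sub (hB t ht)
  rw [hderiv.deriv, sub_neg]
  exact hcontact t ht (fun j ↦ sub_nonpos.1 (hle j)) i heq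

end Barrier

theorem quasiconcaveOn_Icc_of_monotoneOn_of_antitoneOn {𝕜 E β : Type*} [Semiring 𝕜]
    [PartialOrder 𝕜] [AddCommMonoid E] [LinearOrder E] [IsOrderedAddMonoid E] [Module 𝕜 E]
    [PosSMulMono 𝕜 E] [Preorder β] {f : E → β} {a b c : E} (hmono : MonotoneOn f (Icc a c))
    (hanti : AntitoneOn f (Icc c b)) : QuasiconcaveOn 𝕜 (Icc a b) f := by
  refine fun r ↦ OrdConnected.convex ⟨fun x hx y hy z hz ↦ ?_⟩
  have hzI : z ∈ Icc a b := ⟨hx.1.1.trans hz.1, hz.2.trans hy.1.2⟩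
  refine ⟨hzI, ?_⟩
  rcases le_total z c with hzc | hcz
  · exact hx.2.trans (hmono ⟨hx.1.1, hz.1.trans hzc⟩ ⟨hzI.1, hzc⟩ hz.1)
  · exact hy.2.trans (hanti ⟨hcz, hzI.2⟩ ⟨hcz.trans hz.2, hy.1.2⟩ hz.2)

theorem sign_mul_sin (x : ℝ) : SignType.sign x * sin x = sin |x| := by
  rcases lt_trichotomy x 0 with hx | rfl | hx
  · simp [hx, abs_of_neg]
  · simp
  · simp [hx, abs_of_pos]

theorem sign_mul_le_abs {R : Type*} [Ring R] [LinearOrder R] [IsStrictOrderedRing R] (x y : R) :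
    SignType.sign x * y ≤ |y| := by
  rcases lt_trichotomy x 0 with hx | rfl | hx
  · simpa [hx] using neg_le_abs y
  · simp
  · simpa [hx] using le_abs_self y

theorem aW_pos (n : ℕ) : 0 < aW n := by
  unfold aW
  positivity

theorem influence_le_influence_of_abs_le (n : ℕ) {x r : ℝ} (hx : |x| ≤ r) (hr : r ≤ π) :
    influence n r ≤ influence n x := by
  have hcos : cos r ≤ cos x := cos_abs x ▸ cos_le_cos_of_nonneg_of_le_pi (abs_nonneg x) hr hx
  have hnonneg : 0 ≤ 1 + cos r := by linarith [neg_one_le_cos r]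
  have := (aW_pos n).le
  unfold influence
  gcongr

/-- The restoring strength `-S(r) I_n(r)`, which is `|(S I_n)(r)|` for `r ∈ [0, π]`, expanded in the
form in which it bounds the coupling strength. -/
noncomputable def restoringStrength (n : ℕ) (r : ℝ) : ℝ := aW n * sin r * (1 + cos r) ^ n

theorem sin_mul_influence (n : ℕ) (r : ℝ) : sin r * influence n r = restoringStrength n r := by
  unfold influence restoringStrength
  ring

theorem restoringStrength_pos (n : ℕ) {r : ℝ} (h0 : 0 < r) (hπ : r < π) :
    0 < restoringStrength n r := by
  have hsin : 0 < sin r := sin_pos_of_pos_of_lt_pi h0 hπ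
  have hcos : 0 < 1 + cos r := by
    linarith [cos_pi ▸ cos_lt_cos_of_nonneg_of_le_pi h0.le le_rfl hπ]
  have := aW_pos n
  unfold restoringStrength
  positivity

theorem hasDerivAt_restoringStrength (n : ℕ) (r : ℝ) :
    HasDerivAt (restoringStrength n)
      (aW n * (1 + cos r) ^ n * ((n + 1) * cos r - n)) r := by
  have h := ((hasDerivAt_sin r).const_mul (aW n)).mul (((hasDerivAt_cos r).const_add 1).pow n)
  refine h.congr_deriv ?_
  rcases n with _ | m
  · simp
  · simp only [Nat.add_sub_cancel, Pi.pow_apply]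
    push_cast
    linear_combination (-aW (m + 1) * (1 + cos r) ^ m * (m + 1)) * sin_sq_add_cos_sq r

theorem cos_arccos_natCast_div_succ (n : ℕ) : cos (arccos (n / (n + 1))) = n / (n + 1) :=
  cos_arccos (neg_one_lt_zero.le.trans (by positivity))
    (div_le_one_of_le₀ (by simp) (by positivity))

theorem monotoneOn_restoringStrength (n : ℕ) :
    MonotoneOn (restoringStrength n) (Icc 0 (arccos (n / (n + 1)))) := by
  refine monotoneOn_of_hasDerivWithinAt_nonneg (convex_Icc _ _)
    (fun r _ ↦ (hasDerivAt_restoringStrength n r).continuousAt.continuousWithinAt)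
    (fun r _ ↦ (hasDerivAt_restoringStrength n r).hasDerivWithinAt) fun r hr ↦ ?_
  rw [interior_Icc] at hr
  have hcos : n / (n + 1) ≤ cos r := cos_arccos_natCast_div_succ n ▸
    cos_le_cos_of_nonneg_of_le_pi hr.1.le (arccos_le_pi _) hr.2.le
  rw [div_le_iff₀' (by positivity)] at hcos
  have hone : 0 ≤ 1 + cos r := by linarith [neg_one_le_cos r]
  exact mul_nonneg (mul_nonneg (aW_pos n).le (pow_nonneg hone n)) (sub_nonneg.2 hcos)

theorem antitoneOn_restoringStrength (n : ℕ) :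
    AntitoneOn (restoringStrength n) (Icc (arccos (n / (n + 1))) π) := by
  refine antitoneOn_of_hasDerivWithinAt_nonpos (convex_Icc _ _)
    (fun r _ ↦ (hasDerivAt_restoringStrength n r).continuousAt.continuousWithinAt)
    (fun r _ ↦ (hasDerivAt_restoringStrength n r).hasDerivWithinAt) fun r hr ↦ ?_
  rw [interior_Icc] at hr
  have hcos : cos r ≤ n / (n + 1) := cos_arccos_natCast_div_succ n ▸
    cos_le_cos_of_nonneg_of_le_pi (arccos_nonneg _) hr.2.le hr.1.le
  rw [le_div_iff₀' (by positivity)] at hcos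
  have hone : 0 ≤ 1 + cos r := by linarith [neg_one_le_cos r]
  exact mul_nonpos_of_nonneg_of_nonpos (mul_nonneg (aW_pos n).le (pow_nonneg hone n))
    (sub_nonpos.2 hcos)

theorem quasiconcaveOn_restoringStrength (n : ℕ) :
    QuasiconcaveOn ℝ (Icc 0 π) (restoringStrength n) :=
  quasiconcaveOn_Icc_of_monotoneOn_of_antitoneOn (monotoneOn_restoringStrength n)
    (antitoneOn_restoringStrength n)

/-- The vector field of the Winfree model: the velocity of oscillator `i` in the configuration
`x`. -/
noncomputable def winfreeVelocity (n : ℕ) {N : ℕ} (ν : Fin N → ℝ) (κ : ℝ) (x : Fin N → ℝ)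
    (i : Fin N) : ℝ :=
  ν i + (κ / N) * sens (x i) * ∑ j, influence n (x j)

theorem sign_mul_winfreeVelocity_le (n : ℕ) {N : ℕ} (ν : Fin N → ℝ) {κ : ℝ} (hκ : 0 ≤ κ)
    {x : Fin N → ℝ} {i : Fin N} (hmax : ∀ j, |x j| ≤ |x i|) (hπ : |x i| ≤ π) :
    SignType.sign (x i) * winfreeVelocity n ν κ x i ≤ |ν i| - κ * restoringStrength n |x i| := by
  have hN : (0 : ℝ) < N := Nat.cast_pos.2 i.pos
  have hsum : N * influence n |x i| ≤ ∑ j, influence n (x j) := by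
    simpa using Finset.card_nsmul_le_sum Finset.univ (fun j ↦ influence n (x j)) _
      fun j _ ↦ influence_le_influence_of_abs_le n (hmax j) hπ
  have hsin : 0 ≤ sin |x i| := sin_nonneg_of_nonneg_of_le_pi (abs_nonneg _) hπ
  calc SignType.sign (x i) * winfreeVelocity n ν κ x i
      = SignType.sign (x i) * ν i
          - κ / N * (SignType.sign (x i) * sin (x i)) * ∑ j, influence n (x j) := by
        unfold winfreeVelocity sens
        ring
    _ ≤ |ν i| - κ / N * sin |x i| * (N * influence n |x i|) := by
        rw [sign_mul_sin]
        gcongr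
        exact sign_mul_le_abs _ _
    _ = |ν i| - κ * restoringStrength n |x i| := by
        rw [← sin_mul_influence]
        field_simp

namespace IsWinfreeSol

variable {n N : ℕ} {ν : Fin N → ℝ} {κ : ℝ} {θ : Fin N → ℝ → ℝ}

theorem hasDerivAt (hθ : IsWinfreeSol n N ν κ θ) (i : Fin N) {t : ℝ} (ht : 0 ≤ t) :
    HasDerivAt (θ i) (winfreeVelocity n ν κ (fun j ↦ θ j t) i) t :=
  hθ i t ht

theorem abs_lt_on_Ioc_of_lt_deriv (hθ : IsWinfreeSol n N ν κ θ) (hκ : 0 ≤ κ) {a b : ℝ} (ha : 0 ≤ a)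
    {B B' : ℝ → ℝ} (hB : ∀ t ∈ Icc a b, HasDerivAt B (B' t) t)
    (hBmem : ∀ t ∈ Icc a b, B t ∈ Ioc 0 π)
    (hB' : ∀ t ∈ Icc a b, ∀ i, |ν i| - κ * restoringStrength n (B t) < B' t)
    (hinit : ∀ i, |θ i a| ≤ B a) :
    ∀ t ∈ Ioc a b, ∀ i, |θ i t| < B t := by
  refine abs_lt_barrier_on_Ioc (fun i t ht ↦ hθ.hasDerivAt i (ha.trans ht.1)) hB
    (fun t ht ↦ (hBmem t ht).1) hinit fun t ht hle i heq ↦ ?_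
  rw [← heq] at hle
  have hdrift := sign_mul_winfreeVelocity_le n ν hκ hle (heq.trans_le (hBmem t ht).2)
  rw [heq] at hdrift
  exact hdrift.trans_lt (hB' t ht i)

theorem abs_lt_of_sub_lt_mul (hθ : IsWinfreeSol n N ν κ θ) (hκ : 0 ≤ κ) {r₀ r₁ δ t : ℝ}
    (hr₁ : 0 < r₁) (hr : r₁ ≤ r₀) (hπ : r₀ ≤ π)
    (hδ : ∀ r ∈ Icc r₁ r₀, ∀ i, |ν i| + δ ≤ κ * restoringStrength n r)
    (hinit : ∀ i, |θ i 0| ≤ r₀) (ht : 0 < t) (htδ : r₀ - r₁ < δ * t) (i : Fin N) :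
    |θ i t| < r₁ := by
  obtain ⟨v, hvt⟩ : ∃ v, v * t = r₀ - r₁ := ⟨_, div_mul_cancel₀ _ ht.ne'⟩
  have hv : 0 ≤ v := nonneg_of_mul_nonneg_left (hvt ▸ sub_nonneg.2 hr) ht
  have hvδ : v < δ := lt_of_mul_lt_mul_right (hvt ▸ htδ) ht.le
  have hB (s : ℝ) : HasDerivAt (fun s ↦ r₀ - v * s) (-v) s := by
    simpa using ((hasDerivAt_id s).const_mul v).const_sub r₀
  have hBmem : ∀ s ∈ Icc 0 t, r₀ - v * s ∈ Icc r₁ r₀ := fun s hs ↦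
    ⟨by linarith [mul_le_mul_of_nonneg_left hs.2 hv], sub_le_self _ (mul_nonneg hv hs.1)⟩
  calc |θ i t| < r₀ - v * t :=
        hθ.abs_lt_on_Ioc_of_lt_deriv hκ le_rfl (fun s _ ↦ hB s)
          (fun s hs ↦ ⟨hr₁.trans_le (hBmem s hs).1, (hBmem s hs).2.trans hπ⟩)
          (fun s hs j ↦ by linarith [hδ _ (hBmem s hs) j]) (by simpa using hinit)
          t (right_mem_Ioc.2 ht) i
    _ = r₁ := by linarith

end IsWinfreeSol

theorem stmt9_general (n N : ℕ) (ν : Fin N → ℝ) (κ : ℝ) (θ : Fin N → ℝ → ℝ)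
    (hθ : IsWinfreeSol n N ν κ θ) (α αs : ℝ) (hαs0 : 0 < αs) (hαsα : αs ≤ α) (hαπ : α < π)
    (hstrength : restoringStrength n α ≤ restoringStrength n αs)
    (hinit : ∀ i, |θ i 0| ≤ α)
    (hκ : (⨆ i, |ν i|) / restoringStrength n α < κ) :
    ∃ tstar : ℝ, 0 ≤ tstar ∧ ∀ t : ℝ, tstar ≤ t → ∀ i, |θ i t| < αs := by
  have hpos : 0 < restoringStrength n α := restoringStrength_pos n (hαs0.trans_le hαsα) hαπ
  have hκ0 : 0 < κ := (div_nonneg (Real.iSup_nonneg fun i ↦ abs_nonneg (ν i)) hpos.le).trans_lt hκ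
  obtain ⟨δ, hδ, hδκ⟩ : ∃ δ > 0, (⨆ i, |ν i|) + δ = κ * restoringStrength n α :=
    ⟨_, sub_pos.2 ((div_lt_iff₀ hpos).1 hκ), add_sub_cancel _ _⟩
  have hstrong : ∀ r ∈ Icc αs α, restoringStrength n α ≤ restoringStrength n r := fun r hr ↦
    ((quasiconcaveOn_restoringStrength n (restoringStrength n α)).ordConnected.out
      ⟨⟨hαs0.le, hαsα.trans hαπ.le⟩, hstrength⟩
      ⟨⟨hαs0.le.trans hαsα, hαπ.le⟩, le_rfl⟩ hr).2
  have hinward : ∀ r ∈ Icc αs α, ∀ i, |ν i| + δ ≤ κ * restoringStrength n r := fun r hr i ↦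
    calc |ν i| + δ ≤ (⨆ i, |ν i|) + δ := by
          gcongr
          exact le_ciSup (f := fun i ↦ |ν i|) (finite_range _).bddAbove i
      _ = κ * restoringStrength n α := hδκ
      _ ≤ κ * restoringStrength n r := by
          gcongr
          exact hstrong r hr
  refine ⟨(α - αs) / δ + 1, by have := sub_nonneg.2 hαsα; positivity, fun t ht i ↦ ?_⟩
  have hlt : (α - αs) / δ < t := (lt_add_one _).trans_le ht
  exact hθ.abs_lt_of_sub_lt_mul hκ0.le hαs0 hαsα hαπ.le hinward hinit
    ((div_nonneg (sub_nonneg.2 hαsα) hδ.le).trans_lt hlt) ((div_lt_iff₀' hδ).1 hlt) i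

/-- Complete oscillator death: with `β_n = arccos(n/(n+1))`, `β_n < α < π`,
`|θ_i(0)| < α`, and a large coupling, the trajectory is absorbed into
`B(α*)` in finite time, where `α* ∈ (0, β_n]` satisfies
`sin α* (1 + cos α*)^n = sin α (1 + cos α)^n`. -/
theorem stmt9 (n N : ℕ) (hn : 0 < n) [NeZero N] (ν : Fin N → ℝ) (κ : ℝ)
    (θ : Fin N → ℝ → ℝ) (hθ : IsWinfreeSol n N ν κ θ)
    (α αs : ℝ)
    (hβα : Real.arccos ((n : ℝ) / ((n : ℝ) + 1)) < α) (hαπ : α < Real.pi)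
    (hαs0 : 0 < αs) (hαsβ : αs ≤ Real.arccos ((n : ℝ) / ((n : ℝ) + 1)))
    (hαseq : Real.sin αs * (1 + Real.cos αs) ^ n
              = Real.sin α * (1 + Real.cos α) ^ n)
    (hinit : ∀ i : Fin N, |θ i 0| < α)
    (hκ : (⨆ i : Fin N, |ν i|) / (aW n * Real.sin α * (1 + Real.cos α) ^ n) < κ) :
    ∃ tstar : ℝ, 0 ≤ tstar ∧ ∀ t : ℝ, tstar ≤ t → ∀ i : Fin N, |θ i t| < αs := by
  have hstrength : restoringStrength n α ≤ restoringStrength n αs := by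
    simp only [restoringStrength, mul_assoc, hαseq, le_refl]
  exact stmt9_general n N ν κ θ hθ α αs hαs0 (hαsβ.trans hβα.le) hαπ hstrength
    (fun i ↦ (hinit i).le) hκ
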